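/- arXiv:1303.5655 — 3 statements merged into one kernel-verified Lean document; each statement's English description precedes it below -/
import Mathlib

section
/- Let M be a real m×d matrix, D a real d×n matrix, and let y = M D α₀ for some vector α₀ ∈ ℝⁿ. If 2·‖α₀‖₀ < spark(MD), then α₀ is the unique solution of the ℓ₀-minimization problem min ‖α‖₀ subject to y = M D α; that is, for every α₁ ∈ ℝⁿ with M D α₁ = y and ‖α₁‖₀ ≤ ‖α₀‖₀, one has α₁ = α₀. -/
/-- ℓ₀ "norm": the number of nonzero entries of a vector. -/
noncomputable def l0norm {n : ℕ} (α : Fin n → ℝ) : ℕ :=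
  (Finset.univ.filter fun i => α i ≠ 0).card

theorem l0norm_eq_hammingNorm {n : ℕ} (α : Fin n → ℝ) : l0norm α = hammingNorm α := rfl

theorem hammingDist_le_hammingNorm_add {ι : Type*} {β : ι → Type*} [Fintype ι]
    [∀ i, DecidableEq (β i)] [∀ i, Zero (β i)] (x y : ∀ i, β i) :
    hammingDist x y ≤ hammingNorm x + hammingNorm y := by
  simpa only [hammingDist_zero_left, hammingDist_zero_right] using hammingDist_triangle x 0 y

theorem sparse_representation_uniqueness_general {ι F G : Type*} {β : ι → Type*} [Fintype ι]
    [∀ i, DecidableEq (β i)] [∀ i, AddGroup (β i)] [AddZeroClass G]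
    [FunLike F (∀ i, β i) G] [AddMonoidHomClass F (∀ i, β i) G] {f : F} {k : ℕ}
    (hf : ∀ x ≠ 0, f x = 0 → 2 * k < hammingNorm x) :
    Set.InjOn f {x | hammingNorm x ≤ k} := by
  intro x (hx : hammingNorm x ≤ k) y (hy : hammingNorm y ≤ k) hxy
  by_contra hne
  have hker : f (-x + y) = 0 := by rw [map_add, ← hxy, ← map_add, neg_add_cancel, map_zero]
  have hlower : 2 * k < hammingDist x y := by
    rw [hammingDist_eq_hammingNorm]
    exact hf _ (neg_add_eq_zero.not.mpr hne) hker
  have hupper : hammingDist x y ≤ hammingNorm x + hammingNorm y :=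
    hammingDist_le_hammingNorm_add x y
  lia

/-- Uniqueness of the sparsest representation: if `2‖α₀‖₀ < spark(MD)`
(i.e. every nonzero vector in the null space of `MD` has more than `2‖α₀‖₀`
nonzero entries), then `α₀` is the unique solution of the ℓ₀ problem
`min ‖α‖₀ s.t. y = MDα`. -/
theorem sparse_representation_uniqueness
    {m d n : ℕ} (M : Matrix (Fin m) (Fin d) ℝ) (D : Matrix (Fin d) (Fin n) ℝ)
    (α₀ : Fin n → ℝ) (y : Fin m → ℝ) (hy : y = (M * D).mulVec α₀)
    (hspark : ∀ α : Fin n → ℝ, α ≠ 0 → (M * D).mulVec α = 0 →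
      2 * l0norm α₀ < l0norm α) :
    ∀ α₁ : Fin n → ℝ, (M * D).mulVec α₁ = y → l0norm α₁ ≤ l0norm α₀ → α₁ = α₀ := by
  simp only [l0norm_eq_hammingNorm] at hspark ⊢
  exact fun α₁ hα₁ hle ↦ sparse_representation_uniqueness_general (f := (M * D).mulVecLin)
    hspark hle (le_refl (hammingNorm α₀)) (hα₁.trans hy)
end

section
/- Let M be a real m×d matrix and D a real d×n matrix. Suppose that for every index set T of columns of D with |T| ≤ 2k one has range(D_T) ∩ Null(M) = {0} (i.e., 2k < D-spark(M)). Let y = M x₀ where x₀ = D α₀ for some α₀ with ‖α₀‖₀ ≤ k. Then every minimizer α̂ of the problem min ‖α‖₀ subject to y = M D α satisfies D α̂ = x₀; that is, the signal x₀ is perfectly recovered. -/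
section

variable {ι : Type*} {G : ι → Type*} [Fintype ι] [∀ i, Zero (G i)] [∀ i, DecidableEq (G i)]

theorem hammingDist_le_hammingNorm_add_hammingNorm (α β : ∀ i, G i) :
    hammingDist α β ≤ hammingNorm α + hammingNorm β :=
  hammingDist_triangle_right α β 0

end

section

variable {ι E F : Type*} {G : ι → Type*} [∀ i, AddGroup (G i)] [AddGroup E] [AddGroup F]

/-- `LtDSpark D M s` is the condition `s < D-spark(M)`: a signal synthesized by the dictionary `D`
from at most `s` atoms is killed by the measurement map `M` only if it is zero. The range of `D_T`
is encoded as the set of all `D β` with `β` vanishing off `T`. -/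
def LtDSpark (D : (∀ i, G i) →+ E) (M : E →+ F) (s : ℕ) : Prop :=
  ∀ T : Finset ι, T.card ≤ s → ∀ β : ∀ i, G i, (∀ j ∉ T, β j = 0) → M (D β) = 0 → D β = 0

variable [Fintype ι] [∀ i, DecidableEq (G i)] {D : (∀ i, G i) →+ E} {M : E →+ F} {s : ℕ}

theorem LtDSpark.eq_zero_of_hammingNorm_le (hDspark : LtDSpark D M s) {β : ∀ i, G i}
    (hβ : hammingNorm β ≤ s) (hMβ : M (D β) = 0) : D β = 0 :=
  hDspark {i | β i ≠ 0} hβ β (by simp) hMβ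

theorem signal_recovery_uniqueness_general (hDspark : LtDSpark D M s) {α β : ∀ i, G i}
    (hsparse : hammingNorm α + hammingNorm β ≤ s) (hM : M (D α) = M (D β)) : D α = D β := by
  have hdiff_sparse : hammingNorm (-α + β) ≤ s := by
    rw [← hammingDist_eq_hammingNorm]
    exact (hammingDist_le_hammingNorm_add_hammingNorm α β).trans hsparse
  have hdiff_ker : M (D (-α + β)) = 0 := by
    simp only [map_add, map_neg, hM, neg_add_cancel]
  have hdiff : D (-α + β) = 0 := hDspark.eq_zero_of_hammingNorm_le hdiff_sparse hdiff_ker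
  rwa [map_add, map_neg, neg_add_eq_zero] at hdiff

end

/-- Uniqueness for signal recovery: if `2k < D-spark(M)`, i.e. for every index
set `T` with `|T| ≤ 2k` we have `range(D_T) ∩ Null(M) = {0}`, then for a signal
`x₀ = Dα₀` with `‖α₀‖₀ ≤ k` and measurements `y = Mx₀`, every minimizer `α̂` of
`min ‖α‖₀ s.t. y = MDα` satisfies `Dα̂ = x₀`. -/
theorem signal_recovery_uniqueness
    {m d n : ℕ} (M : Matrix (Fin m) (Fin d) ℝ) (D : Matrix (Fin d) (Fin n) ℝ) (k : ℕ)
    (hDspark : ∀ T : Finset (Fin n), T.card ≤ 2 * k →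
      ∀ β : Fin n → ℝ, (∀ j ∉ T, β j = 0) →
        M.mulVec (D.mulVec β) = 0 → D.mulVec β = 0)
    (α₀ : Fin n → ℝ) (hα₀ : l0norm α₀ ≤ k)
    (x₀ : Fin d → ℝ) (hx₀ : x₀ = D.mulVec α₀)
    (y : Fin m → ℝ) (hy : y = M.mulVec x₀)
    (αhat : Fin n → ℝ)
    (hfeas : M.mulVec (D.mulVec αhat) = y)
    (hmin : ∀ α : Fin n → ℝ, M.mulVec (D.mulVec α) = y → l0norm αhat ≤ l0norm α) :
    D.mulVec αhat = x₀ := by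
  subst hx₀ hy
  simp only [l0norm_eq_hammingNorm] at hα₀ hmin
  exact signal_recovery_uniqueness_general (D := D.mulVecLin.toAddMonoidHom)
    (M := M.mulVecLin.toAddMonoidHom) hDspark (by linarith [hmin α₀ rfl]) hfeas
end

section
/- Let M be a real m×d matrix and D a real d×n matrix, and suppose M satisfies the D-RIP of order 2k with constant δ_{2k}^D < 1. Let y = M x₀ + e where ‖e‖₂ ≤ ε and x₀ = D α₀ with ‖α₀‖₀ ≤ k. Then for any α̂ ∈ ℝⁿ with ‖α̂‖₀ ≤ k and ‖y − M D α̂‖₂ ≤ ε (in particular, for any minimizer of ‖α‖₀ subject to ‖y − M D α‖₂ ≤ ε), the recovered signal x̂ = D α̂ satisfies ‖x₀ − x̂‖₂ ≤ 2ε / √(1 − δ_{2k}^D). -/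
/-- Euclidean (ℓ₂) norm of a vector. -/
noncomputable def norm2 {n : ℕ} (x : Fin n → ℝ) : ℝ :=
  Real.sqrt (∑ i, x i ^ 2)

theorem norm2_eq_norm_toLp {n : ℕ} (x : Fin n → ℝ) : norm2 x = ‖WithLp.toLp 2 x‖ := by
  simp only [norm2, EuclideanSpace.norm_eq, Real.norm_eq_abs, sq_abs]

theorem hammingNorm_sub_le {ι : Type*} {G : ι → Type*} [Fintype ι] [∀ i, AddGroup (G i)]
    [∀ i, DecidableEq (G i)] (x y : ∀ i, G i) :
    hammingNorm (x - y) ≤ hammingNorm x + hammingNorm y :=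
  calc hammingNorm (x - y) = hammingDist x y := by
        simp only [hammingNorm, hammingDist, Pi.sub_apply, sub_ne_zero]
    _ ≤ hammingDist x 0 + hammingDist 0 y := hammingDist_triangle x 0 y
    _ = hammingNorm x + hammingNorm y := by rw [hammingDist_zero_right, hammingDist_zero_left]

theorem le_div_sqrt_of_mul_sq_le_sq {a b c : ℝ} (hc : 0 < c) (hb : 0 ≤ b)
    (h : c * a ^ 2 ≤ b ^ 2) : a ≤ b / √c := by
  rw [le_div_iff₀ (Real.sqrt_pos.mpr hc)]
  refine le_of_sq_le_sq ?_ hb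
  rwa [mul_pow, Real.sq_sqrt hc.le, mul_comm]

theorem Drip_signal_stability_general {ι : Type*} {G : ι → Type*} [Fintype ι]
    [∀ i, AddGroup (G i)] [∀ i, DecidableEq (G i)] {E F : Type*}
    [SeminormedAddCommGroup E] [SeminormedAddCommGroup F]
    (M : E →+ F) (D : (∀ i, G i) →+ E) {k : ℕ} {δ ε : ℝ} (hδ1 : δ < 1)
    (hDRIP : ∀ α, hammingNorm α ≤ 2 * k → (1 - δ) * ‖D α‖ ^ 2 ≤ ‖M (D α)‖ ^ 2)
    {α β : ∀ i, G i} (hα : hammingNorm α ≤ k) (hβ : hammingNorm β ≤ k)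
    {y : F} (hyα : ‖y - M (D α)‖ ≤ ε) (hyβ : ‖y - M (D β)‖ ≤ ε) :
    ‖D α - D β‖ ≤ 2 * ε / √(1 - δ) := by
  have sparse_sub : hammingNorm (α - β) ≤ 2 * k :=
    (hammingNorm_sub_le α β).trans (by omega)
  have measurement_bound : ‖M (D (α - β))‖ ≤ 2 * ε :=
    calc ‖M (D (α - β))‖ = ‖M (D α) - M (D β)‖ := by simp only [map_sub]
      _ ≤ ‖M (D α) - y‖ + ‖y - M (D β)‖ := norm_sub_le_norm_sub_add_norm_sub ..
      _ ≤ 2 * ε := by rw [norm_sub_rev]; linarith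
  calc ‖D α - D β‖ = ‖D (α - β)‖ := by rw [map_sub]
    _ ≤ ‖M (D (α - β))‖ / √(1 - δ) :=
      le_div_sqrt_of_mul_sq_le_sq (sub_pos.mpr hδ1) (norm_nonneg _) (hDRIP _ sparse_sub)
    _ ≤ 2 * ε / √(1 - δ) := by gcongr

/-- Stability of signal recovery under the D-RIP: if `M` satisfies the D-RIP of
order `2k` with constant `δ < 1`, `y = Mx₀ + e` with `‖e‖₂ ≤ ε` and
`x₀ = Dα₀`, `‖α₀‖₀ ≤ k`, then for any `αhat` with `‖αhat‖₀ ≤ k` and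
`‖y − MDαhat‖₂ ≤ ε`, the recovered signal `xhat = Dαhat` satisfies
`‖x₀ − xhat‖₂ ≤ 2ε/√(1 − δ)`. -/
theorem Drip_signal_stability
    {m d n : ℕ} (M : Matrix (Fin m) (Fin d) ℝ) (D : Matrix (Fin d) (Fin n) ℝ)
    (k : ℕ) (δ ε : ℝ) (hδ1 : δ < 1)
    (hDRIP : ∀ x : Fin d → ℝ,
      (∃ α : Fin n → ℝ, l0norm α ≤ 2 * k ∧ x = D.mulVec α) →
      (1 - δ) * (norm2 x) ^ 2 ≤ (norm2 (M.mulVec x)) ^ 2 ∧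
      (norm2 (M.mulVec x)) ^ 2 ≤ (1 + δ) * (norm2 x) ^ 2)
    (α₀ : Fin n → ℝ) (hα₀ : l0norm α₀ ≤ k)
    (x₀ : Fin d → ℝ) (hx₀ : x₀ = D.mulVec α₀)
    (e : Fin m → ℝ) (he : norm2 e ≤ ε)
    (y : Fin m → ℝ) (hy : y = M.mulVec x₀ + e)
    (αhat : Fin n → ℝ) (hαh : l0norm αhat ≤ k)
    (hfeas : norm2 (y - M.mulVec (D.mulVec αhat)) ≤ ε) :
    norm2 (x₀ - D.mulVec αhat) ≤ 2 * ε / Real.sqrt (1 - δ) := by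
  subst hx₀ hy
  simp only [l0norm_eq_hammingNorm, norm2_eq_norm_toLp] at *
  have noise_bound : ‖WithLp.toLp 2 (M.mulVec (D.mulVec α₀) + e - M.mulVec (D.mulVec α₀))‖ ≤ ε := by
    rwa [add_sub_cancel_left]
  exact Drip_signal_stability_general (Matrix.toLpLin 2 2 M).toAddMonoidHom
    ((WithLp.addEquiv 2 (Fin d → ℝ)).symm.toAddMonoidHom.comp D.mulVecLin.toAddMonoidHom) hδ1
    (fun α hα => (hDRIP _ ⟨α, hα, rfl⟩).1) hα₀ hαh
    (y := WithLp.toLp 2 (M.mulVec (D.mulVec α₀) + e)) noise_bound hfeas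
end
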